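/- (Gaussian mechanism.) Let p ≥ 1, s > 0, 0 < ε < 1, 0 < δ < 1, and set σ² = 2(s²/ε²)·ln(1.25/δ). Let μ₁, μ₂ ∈ ℝᵖ with ‖μ₁ − μ₂‖₂ ≤ s. Then for every Borel set S ⊆ ℝᵖ, γ_{μ₁,σ²}(S) ≤ e^ε·γ_{μ₂,σ²}(S) + δ. -/

import Mathlib

open MeasureTheory ProbabilityTheory
open scoped NNReal

/-- The Gaussian measure on `ℝᵖ` with mean `μ` and covariance `v·I`, i.e. the
product of the one-dimensional Gaussian measures `N(μ i, v)`. -/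
noncomputable def gaussianPi {p : ℕ} (μ : Fin p → ℝ) (v : ℝ≥0) :
    Measure (Fin p → ℝ) :=
  Measure.pi fun i => gaussianReal (μ i) v

/-!
The density of `γ_{a,v}` with respect to `γ_{b,v}` is `exp ℓ`, where `ℓ` is the privacy loss.
Splitting a set according to whether `ℓ ≤ ε` gives
`γ_{a,v} S ≤ e^ε γ_{b,v} S + γ_{a,v} {ℓ > ε}`. The loss is a sum of affine functions of the
independent coordinates, so under `γ_{a,v}` its law is `N(K/2, K)` with `K = ∑ᵢ (aᵢ - bᵢ)² / vᵢ`.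
It remains to bound the upper tail at `ε` of this one-dimensional Gaussian by `δ`. When `K/2 ≤ ε`,
this is the sub-Gaussian tail bound with its factor `1/2`, and the constant `1.25` is there to
absorb the error `e^{ε/2}`, since `e^{1/2} / 2 ≤ 1.25`. When `ε < K/2`, the variance bound forces
`δ ≥ 0.9`, and it is enough that the tail exceeds `1/2` by at most the maximal density times
`K/2 - ε`.
-/

open scoped ENNReal

section WithDensity

variable {α : Type*} {mα : MeasurableSpace α} {ν : Measure α}

lemma withDensity_apply_le_const_mul {f : α → ℝ≥0∞} {c : ℝ≥0∞} {s : Set α}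
    (hs : MeasurableSet s) (hf : ∀ x ∈ s, f x ≤ c) : ν.withDensity f s ≤ c * ν s := by
  rw [withDensity_apply _ hs, ← setLIntegral_const]
  exact setLIntegral_mono' hs hf

lemma withDensity_apply_le_const_mul_add {f : α → ℝ≥0∞} (hf : Measurable f) (c : ℝ≥0∞)
    (s : Set α) : ν.withDensity f s ≤ c * ν s + ν.withDensity f {x | c < f x} := by
  set t := toMeasurable ν s
  have ht : MeasurableSet t := measurableSet_toMeasurable ν s
  have hle : MeasurableSet {x | f x ≤ c} := measurableSet_le hf measurable_const
  have hsub : s ⊆ t ∩ {x | f x ≤ c} ∪ {x | c < f x} := fun x hx =>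
    (le_or_gt (f x) c).imp (fun h => ⟨subset_toMeasurable ν s hx, h⟩) id
  calc ν.withDensity f s
      ≤ ν.withDensity f (t ∩ {x | f x ≤ c}) + ν.withDensity f {x | c < f x} :=
        (measure_mono hsub).trans (measure_union_le _ _)
    _ ≤ c * ν (t ∩ {x | f x ≤ c}) + ν.withDensity f {x | c < f x} := by
        gcongr
        exact withDensity_apply_le_const_mul (ht.inter hle) fun x hx => hx.2
    _ ≤ c * ν s + ν.withDensity f {x | c < f x} := by
        gcongr c * ?_ + _
        exact (measure_mono Set.inter_subset_left).trans_eq (measure_toMeasurable s)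

end WithDensity

section Pi

variable {ι : Type*} [Fintype ι]

lemma indicator_univ_pi_prod {α : ι → Type*} {M : Type*} [CommMonoidWithZero M]
    (s : ∀ i, Set (α i)) (f : ∀ i, α i → M) (x : ∀ i, α i) :
    (Set.univ.pi s).indicator (fun x => ∏ i, f i (x i)) x = ∏ i, (s i).indicator (f i) (x i) := by
  by_cases hx : x ∈ Set.univ.pi s
  · rw [Set.indicator_of_mem hx]
    exact Finset.prod_congr rfl fun i _ => (Set.indicator_of_mem (hx i trivial) _).symm
  · obtain ⟨i, hi⟩ : ∃ i, x i ∉ s i := by simpa using hx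
    rw [Set.indicator_of_notMem hx]
    exact (Finset.prod_eq_zero (Finset.mem_univ i) (Set.indicator_of_notMem hi _)).symm

lemma pi_withDensity {α : ι → Type*} [∀ i, MeasurableSpace (α i)] (μ : ∀ i, Measure (α i))
    [∀ i, IsProbabilityMeasure (μ i)] {f : ∀ i, α i → ℝ≥0∞}
    [∀ i, SigmaFinite ((μ i).withDensity (f i))] (hf : ∀ i, Measurable (f i)) :
    Measure.pi (fun i => (μ i).withDensity (f i)) =
      (Measure.pi μ).withDensity fun x => ∏ i, f i (x i) := by
  refine Measure.pi_eq fun s hs => ?_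
  have hm (i : ι) : Measurable ((s i).indicator (f i)) := (hf i).indicator (hs i)
  calc (Measure.pi μ).withDensity (fun x => ∏ i, f i (x i)) (Set.univ.pi s)
      = ∫⁻ x, ∏ i, (s i).indicator (f i) (x i) ∂Measure.pi μ := by
        rw [withDensity_apply _ (.univ_pi hs), ← lintegral_indicator (.univ_pi hs)]
        simp_rw [indicator_univ_pi_prod]
    _ = ∏ i, ∫⁻ x, (s i).indicator (f i) (x i) ∂Measure.pi μ :=
        lintegral_prod_eq_prod_lintegral_of_indepFun _
          (fun i (x : ∀ i, α i) => (s i).indicator (f i) (x i))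
          (iIndepFun_pi fun i => (hm i).aemeasurable)
          fun i => (hm i).comp (measurable_pi_apply i)
    _ = ∏ i, (μ i).withDensity (f i) (s i) := by
        refine Finset.prod_congr rfl fun i _ => ?_
        rw [(measurePreserving_eval μ i).lintegral_comp (hm i), lintegral_indicator (hs i),
          withDensity_apply _ (hs i)]

lemma pi_gaussianReal_map_sum (m : ι → ℝ) (v : ι → ℝ≥0) :
    (Measure.pi fun i => gaussianReal (m i) (v i)).map (fun x => ∑ i, x i) =
      gaussianReal (∑ i, m i) (∑ i, v i) := by
  refine Measure.ext_of_charFun ?_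
  ext t
  rw [charFun_map_sum_pi_eq_prod, Finset.prod_apply]
  simp_rw [charFun_gaussianReal, ← Complex.exp_sum]
  push_cast
  rw [Finset.sum_sub_distrib, ← Finset.sum_mul, ← Finset.mul_sum, ← Finset.sum_div,
    ← Finset.sum_mul]

end Pi

section PrivacyLoss

/-- The privacy loss of `N(a, v)` against `N(b, v)`: the logarithm of the ratio of their densities
at `x`. It is `0` when `v = 0`. -/
noncomputable def gaussianPrivacyLoss (a b : ℝ) (v : ℝ≥0) (x : ℝ) : ℝ :=
  ((x - b) ^ 2 - (x - a) ^ 2) / (2 * v)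

@[fun_prop]
lemma measurable_gaussianPrivacyLoss (a b : ℝ) (v : ℝ≥0) :
    Measurable (gaussianPrivacyLoss a b v) := by
  unfold gaussianPrivacyLoss
  fun_prop

lemma gaussianReal_eq_withDensity_exp_gaussianPrivacyLoss (a b : ℝ) {v : ℝ≥0} (hv : v ≠ 0) :
    gaussianReal a v = (gaussianReal b v).withDensity
      fun x => ENNReal.ofReal (Real.exp (gaussianPrivacyLoss a b v x)) := by
  rw [gaussianReal_of_var_ne_zero a hv, gaussianReal_of_var_ne_zero b hv,
    ← withDensity_mul _ (measurable_gaussianPDF b v) (by fun_prop)]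
  congr 1 with x
  simp only [Pi.mul_apply, gaussianPDF, gaussianPDFReal, gaussianPrivacyLoss]
  rw [← ENNReal.ofReal_mul (by positivity), mul_assoc (√(2 * Real.pi * v))⁻¹, ← Real.exp_add]
  congr 3
  ring

lemma gaussianReal_map_gaussianPrivacyLoss (a b : ℝ) {v : ℝ≥0} (hv : v ≠ 0) :
    (gaussianReal a v).map (gaussianPrivacyLoss a b v) =
      gaussianReal (((nndist a b ^ 2 / v : ℝ≥0) : ℝ) / 2) (nndist a b ^ 2 / v) := by
  have hv' : (v : ℝ) ≠ 0 := by exact_mod_cast hv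
  have haffine : gaussianPrivacyLoss a b v =
      (fun y => y + (b ^ 2 - a ^ 2) / (2 * v)) ∘ fun x => (a - b) / v * x := by
    ext x
    simp only [gaussianPrivacyLoss, Function.comp_apply]
    field_simp
    ring
  rw [haffine, ← Measure.map_map (by fun_prop) (by fun_prop), gaussianReal_map_const_mul,
    gaussianReal_map_add_const]
  congr 1
  · push_cast
    rw [Real.dist_eq, sq_abs]
    field_simp
    ring
  · ext
    push_cast
    rw [Real.dist_eq, sq_abs]
    field_simp

end PrivacyLoss

section GaussianTail

variable (m : ℝ) {v : ℝ≥0} {t : ℝ}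

lemma gaussianReal_Ici_self (hv : v ≠ 0) :
    gaussianReal m v (Set.Ici m) = ENNReal.ofReal (1 / 2) := by
  have := nullSingletonClass_gaussianReal (μ := m) hv
  have hreflect : gaussianReal m v (Set.Iio m) = gaussianReal m v (Set.Ici m) := by
    have hmap : (gaussianReal m v).map (fun x => 2 * m - x) = gaussianReal m v := by
      rw [gaussianReal_map_const_sub]
      congr 1
      ring
    have hpre : (fun x => 2 * m - x) ⁻¹' Set.Ici m = Set.Iic m := by
      ext x
      simp only [Set.mem_preimage, Set.mem_Ici, Set.mem_Iic]
      constructor <;> intro h <;> linarith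
    rw [← hmap, Measure.map_apply (by fun_prop) measurableSet_Ici, hpre, hmap]
    exact measure_congr Iio_ae_eq_Iic
  have hadd := probReal_add_probReal_compl (μ := gaussianReal m v) (measurableSet_Ici (a := m))
  rw [Set.compl_Ici, measureReal_def _ (Set.Iio m), hreflect, ← measureReal_def] at hadd
  rw [← ofReal_measureReal]
  congr 1
  linarith

lemma gaussianReal_Ici_add_le (hv : v ≠ 0) (ht : 0 ≤ t) :
    gaussianReal m v (Set.Ici (m + t)) ≤ ENNReal.ofReal (Real.exp (-t ^ 2 / (2 * v)) / 2) := by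
  have hshift : gaussianReal m v (Set.Ici (m + t)) = gaussianReal (m - t) v (Set.Ici m) := by
    rw [← gaussianReal_map_sub_const t, Measure.map_apply (by fun_prop) measurableSet_Ici]
    congr 1 with x
    simp
  rw [hshift, gaussianReal_eq_withDensity_exp_gaussianPrivacyLoss (m - t) m hv, div_eq_mul_one_div,
    ENNReal.ofReal_mul (Real.exp_pos _).le, ← gaussianReal_Ici_self m hv]
  refine withDensity_apply_le_const_mul measurableSet_Ici fun x hx => ?_
  have hxt : 0 ≤ (x - m) * t := mul_nonneg (sub_nonneg.2 hx) ht
  unfold gaussianPrivacyLoss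
  gcongr
  linarith

lemma gaussianReal_apply_le_mul_volume (hv : v ≠ 0) {s : Set ℝ} (hs : MeasurableSet s) :
    gaussianReal m v s ≤ ENNReal.ofReal (√(2 * Real.pi * v))⁻¹ * volume s := by
  rw [gaussianReal_of_var_ne_zero m hv]
  refine withDensity_apply_le_const_mul hs fun x _ => ENNReal.ofReal_le_ofReal ?_
  refine mul_le_of_le_one_right (by positivity) (Real.exp_le_one_iff.2 ?_)
  exact div_nonpos_of_nonpos_of_nonneg (neg_nonpos.2 (sq_nonneg _)) (by positivity)

lemma gaussianReal_Ici_sub_le (hv : v ≠ 0) (ht : 0 ≤ t) :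
    gaussianReal m v (Set.Ici (m - t)) ≤ ENNReal.ofReal (t / √(2 * Real.pi * v) + 1 / 2) := by
  rw [← Set.Ico_union_Ici_eq_Ici (sub_le_self m ht),
    ENNReal.ofReal_add (by positivity) (by norm_num), ← gaussianReal_Ici_self m hv]
  refine (measure_union_le _ _).trans (add_le_add_left ?_ _)
  refine (gaussianReal_apply_le_mul_volume m hv measurableSet_Ico).trans_eq ?_
  rw [Real.volume_Ico, sub_sub_cancel, ← ENNReal.ofReal_mul (by positivity), inv_mul_eq_div]

end GaussianTail

section Product

variable {ι : Type*} [Fintype ι]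

/-- The squared Mahalanobis distance of `a` and `b` for the diagonal covariance with entries `v i`.
It is the variance of the privacy loss of two Gaussian measures with means `a` and `b`, hence
takes values in `ℝ≥0`. -/
noncomputable def sqMahalanobisDist (a b : ι → ℝ) (v : ι → ℝ≥0) : ℝ≥0 :=
  ∑ i, nndist (a i) (b i) ^ 2 / v i

lemma coe_sqMahalanobisDist_const (a b : ι → ℝ) (v : ℝ≥0) :
    (sqMahalanobisDist a b fun _ => v : ℝ) = (∑ i, (a i - b i) ^ 2) / v := by
  simp [sqMahalanobisDist, Real.dist_eq, Finset.sum_div]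

variable (a b : ι → ℝ) {v : ι → ℝ≥0}

lemma pi_gaussianReal_eq_withDensity_exp_sum_gaussianPrivacyLoss (hv : ∀ i, v i ≠ 0) :
    Measure.pi (fun i => gaussianReal (a i) (v i)) =
      (Measure.pi fun i => gaussianReal (b i) (v i)).withDensity fun x =>
        ENNReal.ofReal (Real.exp (∑ i, gaussianPrivacyLoss (a i) (b i) (v i) (x i))) := by
  simp_rw [fun i => gaussianReal_eq_withDensity_exp_gaussianPrivacyLoss (a i) (b i) (hv i)]
  rw [pi_withDensity _ fun i => by fun_prop]
  congr 1 with x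
  rw [Real.exp_sum, ENNReal.ofReal_prod_of_nonneg fun i _ => (Real.exp_pos _).le]

lemma pi_gaussianReal_map_sum_gaussianPrivacyLoss (hv : ∀ i, v i ≠ 0) :
    (Measure.pi fun i => gaussianReal (a i) (v i)).map
        (fun x => ∑ i, gaussianPrivacyLoss (a i) (b i) (v i) (x i)) =
      gaussianReal (sqMahalanobisDist a b v / 2) (sqMahalanobisDist a b v) := by
  have hlaw (i : ι) := gaussianReal_map_gaussianPrivacyLoss (a i) (b i) (hv i)
  have hσ (i : ι) : SigmaFinite
      ((gaussianReal (a i) (v i)).map (gaussianPrivacyLoss (a i) (b i) (v i))) := by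
    rw [hlaw]
    infer_instance
  calc (Measure.pi fun i => gaussianReal (a i) (v i)).map
        ((fun y => ∑ i, y i) ∘ fun x i => gaussianPrivacyLoss (a i) (b i) (v i) (x i))
      = (Measure.pi fun i => gaussianReal (((nndist (a i) (b i) ^ 2 / v i : ℝ≥0) : ℝ) / 2)
          (nndist (a i) (b i) ^ 2 / v i)).map (fun y => ∑ i, y i) := by
        rw [← Measure.map_map (by fun_prop) (by fun_prop),
          Measure.pi_map_pi fun i => (measurable_gaussianPrivacyLoss _ _ _).aemeasurable]
        simp_rw [hlaw]
    _ = gaussianReal (sqMahalanobisDist a b v / 2) (sqMahalanobisDist a b v) := by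
        rw [pi_gaussianReal_map_sum, ← Finset.sum_div, ← NNReal.coe_sum, sqMahalanobisDist]

lemma pi_gaussianReal_apply_le_exp_mul_add_gaussianReal_Ioi (hv : ∀ i, v i ≠ 0) (ε : ℝ)
    (S : Set (ι → ℝ)) :
    Measure.pi (fun i => gaussianReal (a i) (v i)) S ≤
      ENNReal.ofReal (Real.exp ε) * Measure.pi (fun i => gaussianReal (b i) (v i)) S +
        gaussianReal (sqMahalanobisDist a b v / 2) (sqMahalanobisDist a b v) (Set.Ioi ε) := by
  have hset : {x : ι → ℝ | ENNReal.ofReal (Real.exp ε) <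
      ENNReal.ofReal (Real.exp (∑ i, gaussianPrivacyLoss (a i) (b i) (v i) (x i)))} =
      (fun x => ∑ i, gaussianPrivacyLoss (a i) (b i) (v i) (x i)) ⁻¹' Set.Ioi ε := by
    ext x
    simp [ENNReal.ofReal_lt_ofReal_iff (Real.exp_pos _)]
  rw [← pi_gaussianReal_map_sum_gaussianPrivacyLoss a b hv,
    Measure.map_apply (by fun_prop) measurableSet_Ioi, ← hset,
    pi_gaussianReal_eq_withDensity_exp_sum_gaussianPrivacyLoss a b hv]
  exact withDensity_apply_le_const_mul_add (by fun_prop) _ S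

end Product

section Calibration

variable {K : ℝ≥0} {ε δ : ℝ}

lemma gaussianReal_div_two_Ici_le_of_div_two_le (hK0 : K ≠ 0) (hε1 : ε ≤ 1) (hδ0 : 0 < δ)
    (hK : 2 * K * Real.log (1.25 / δ) ≤ ε ^ 2) (hKε : (K : ℝ) / 2 ≤ ε) :
    gaussianReal (K / 2) K (Set.Ici ε) ≤ ENNReal.ofReal δ := by
  have hexponent : -(ε - K / 2) ^ 2 / (2 * K) ≤ 1 / 2 - Real.log (1.25 / δ) := by
    rw [div_le_iff₀ (by positivity)]
    nlinarith [mul_le_mul_of_nonneg_right hε1 K.coe_nonneg]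
  have hexp_half : Real.exp (1 / 2) ≤ 2.5 := by
    have hsq : Real.exp (1 / 2) ^ 2 = Real.exp 1 := by
      rw [← Real.exp_nat_mul]
      norm_num
    nlinarith [Real.exp_one_lt_d9]
  have htail := gaussianReal_Ici_add_le (K / 2) hK0 (sub_nonneg.2 hKε)
  rw [add_sub_cancel] at htail
  refine htail.trans (ENNReal.ofReal_le_ofReal ?_)
  calc Real.exp (-(ε - K / 2) ^ 2 / (2 * K)) / 2
      ≤ Real.exp (1 / 2 - Real.log (1.25 / δ)) / 2 := by gcongr
    _ = Real.exp (1 / 2) * δ / 2.5 := by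
        rw [Real.exp_sub, Real.exp_log (by positivity)]
        field_simp
        norm_num
    _ ≤ 2.5 * δ / 2.5 := by gcongr
    _ = δ := by ring

lemma gaussianReal_div_two_Ici_le_of_lt_div_two (hε0 : 0 < ε) (hε1 : ε ≤ 1) (hδ0 : 0 < δ)
    (hδ1 : δ ≤ 1) (hK : 2 * K * Real.log (1.25 / δ) ≤ ε ^ 2) (hKε : ε < K / 2) :
    gaussianReal (K / 2) K (Set.Ici ε) ≤ ENNReal.ofReal δ := by
  have hKpos : (0 : ℝ) < K := by linarith
  have hlog : 1 - 0.8 * δ ≤ Real.log (1.25 / δ) := by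
    convert Real.one_sub_inv_le_log_of_pos (x := 1.25 / δ) (by positivity) using 2
    field_simp
    norm_num
  have hK_le_sq : 2 * K * (1 - 0.8 * δ) ≤ ε ^ 2 := (by gcongr : _ ≤ _).trans hK
  have hK_le : (K : ℝ) ≤ 2.5 := by nlinarith
  have hδ : 0.9 ≤ δ := by
    have hδ_quarter : 1 - 0.8 * δ ≤ 1 / 4 := by
      refine le_of_mul_le_mul_left ?_ (by positivity : (0 : ℝ) < 2 * K)
      calc 2 * K * (1 - 0.8 * δ) ≤ ε ^ 2 := hK_le_sq
        _ ≤ ε := pow_le_of_le_one hε0.le hε1 two_ne_zero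
        _ ≤ 2 * K * (1 / 4) := by linarith
    linarith
  have hexcess : (K / 2 - ε) / √(2 * Real.pi * K) ≤ 0.4 := by
    rw [div_le_iff₀ (by positivity), ← div_le_iff₀' (by norm_num)]
    refine Real.le_sqrt_of_sq_le ?_
    calc ((K / 2 - ε) / 0.4) ^ 2 ≤ ((K : ℝ) / 2 / 0.4) ^ 2 := by
          gcongr
          linarith
      _ = 25 / 16 * (K : ℝ) * K := by ring
      _ ≤ 2 * Real.pi * K := by
          gcongr ?_ * (K : ℝ)
          linarith [Real.pi_gt_three]
  have htail := gaussianReal_Ici_sub_le (K / 2) (by exact_mod_cast hKpos.ne') (sub_pos.2 hKε).le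
  rw [sub_sub_cancel] at htail
  exact htail.trans (ENNReal.ofReal_le_ofReal (by linarith))

lemma gaussianReal_div_two_Ici_le (hε0 : 0 < ε) (hε1 : ε ≤ 1) (hδ0 : 0 < δ) (hδ1 : δ ≤ 1)
    (hK : 2 * K * Real.log (1.25 / δ) ≤ ε ^ 2) :
    gaussianReal (K / 2) K (Set.Ici ε) ≤ ENNReal.ofReal δ := by
  rcases eq_or_ne K 0 with rfl | hK0
  · simp [hε0]
  rcases le_or_gt ((K : ℝ) / 2) ε with hKε | hKε
  · exact gaussianReal_div_two_Ici_le_of_div_two_le hK0 hε1 hδ0 hK hKε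
  · exact gaussianReal_div_two_Ici_le_of_lt_div_two hε0 hε1 hδ0 hδ1 hK hKε

end Calibration

theorem gaussian_mechanism_general {ι : Type*} [Fintype ι] {ε δ : ℝ} (hε0 : 0 < ε) (hε1 : ε ≤ 1)
    (hδ0 : 0 < δ) (hδ1 : δ ≤ 1) (μ₁ μ₂ : ι → ℝ) {v : ι → ℝ≥0} (hv : ∀ i, v i ≠ 0)
    (hμ : 2 * sqMahalanobisDist μ₁ μ₂ v * Real.log (1.25 / δ) ≤ ε ^ 2) (S : Set (ι → ℝ)) :
    Measure.pi (fun i => gaussianReal (μ₁ i) (v i)) S ≤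
      ENNReal.ofReal (Real.exp ε) * Measure.pi (fun i => gaussianReal (μ₂ i) (v i)) S +
        ENNReal.ofReal δ := by
  refine (pi_gaussianReal_apply_le_exp_mul_add_gaussianReal_Ioi μ₁ μ₂ hv ε S).trans ?_
  gcongr
  exact (measure_mono Set.Ioi_subset_Ici_self).trans
    (gaussianReal_div_two_Ici_le hε0 hε1 hδ0 hδ1 hμ)

/-- **The Gaussian mechanism.** If `‖μ₁ - μ₂‖₂ ≤ s` and
`σ² = 2 (s²/ε²) ln(1.25/δ)`, then the Gaussian measures with means `μ₁`, `μ₂`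
and covariance `σ²·I` satisfy the `(ε,δ)`-differential privacy inequality. -/
theorem gaussian_mechanism {p : ℕ} (hp : 1 ≤ p) (s ε δ : ℝ)
    (hs : 0 < s) (hε0 : 0 < ε) (hε1 : ε < 1) (hδ0 : 0 < δ) (hδ1 : δ < 1)
    (σsq : ℝ) (hσsq : σsq = 2 * (s ^ 2 / ε ^ 2) * Real.log (1.25 / δ))
    (μ₁ μ₂ : Fin p → ℝ)
    (hμ : Real.sqrt (∑ i, (μ₁ i - μ₂ i) ^ 2) ≤ s) :
    ∀ S : Set (Fin p → ℝ), MeasurableSet S →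
      gaussianPi μ₁ σsq.toNNReal S
        ≤ ENNReal.ofReal (Real.exp ε) * gaussianPi μ₂ σsq.toNNReal S
          + ENNReal.ofReal δ := by
  intro S _
  have hlog : 0 < Real.log (1.25 / δ) := Real.log_pos ((one_lt_div hδ0).2 (by linarith))
  have hσ : 0 < σsq := by rw [hσsq]; positivity
  refine gaussian_mechanism_general hε0 hε1.le hδ0 hδ1.le μ₁ μ₂
    (fun _ => (Real.toNNReal_pos.2 hσ).ne') ?_ S
  rw [coe_sqMahalanobisDist_const, Real.coe_toNNReal _ hσ.le]
  calc 2 * ((∑ i, (μ₁ i - μ₂ i) ^ 2) / σsq) * Real.log (1.25 / δ)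
      ≤ 2 * (s ^ 2 / σsq) * Real.log (1.25 / δ) := by
        gcongr
        exact (Real.sqrt_le_left hs.le).1 hμ
    _ = ε ^ 2 := by
        rw [hσsq]
        field_simp
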